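/- Let p ∈ ℕ^m (m ≥ 1) and q ∈ ℕ^n with Σ_i p_i = Σ_j q_j, let b = max_j q_j, and let r = q̄ ∈ ℕ^b be the counts vector of q. Let S = {s ∈ ℕ^b : Σ_i s_i = p_1 and s_i ≤ r_i + s_{i+1} for all 1 ≤ i ≤ b, where s_{b+1} := 0}. Suppose that for each s ∈ S a vector w_s ∈ ℕ^n is given whose counts vector equals r ⊖ s = r − s + Ls. Then M(p,q) = Σ_{s ∈ S} (∏_{i=1}^b binom(r_i + s_{i+1}, s_i)) · M((p_2,…,p_m), w_s). -/

import Mathlib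

/-!
Condition on the first row of the matrix, or rather on the vector `c ≤ q` of the column sums that
are left once it is removed. With `t i = #{j | c j ≤ i < q j}` (`levelCount`), the columns with
`c j ≤ i + 1 ≤ q j` can be split in two ways, according to whether `q j = i + 1`, or whether
`c j = i + 1`. This gives
`#{c = i + 1} + t i = #{q = i + 1} + t (i + 1)` (`countAt_add_levelCount`),
so the first row determines an `s` in the index set of the sum, namely `s = t`, and the counts
vector of `c` is `r ⊖ s`. Since the number of matrices only depends on the multiset of column sums
(`Mcount_eq_of_countAt`), every such `c` contributes `Mcount (p ∘ Fin.succ) (w s)`.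

It remains to count the `c` that give rise to a prescribed `s` (`card_levelCount_eq`). This goes
by induction on the bound `b` on `q`, decreasing `c` and `q` by one (truncated at `0`): once
`c - 1` is known, `c` amounts to the set `{j | c j = 0 < q j}`, an arbitrary subset of size `s 0`
of `{j | c j - 1 = 0 < q j}`, which has `r 0 + s 1` elements (indices starting at `0`, so that `r 0`
is the number of `j` with `q j = 1`).
-/

/-- Number of entries of `v` equal to `i` (the counts vector of `v`, evaluated at `i`). -/
def countAt {n : ℕ} (v : Fin n → ℕ) (i : ℕ) : ℕ :=
  (Finset.univ.filter fun j => v j = i).card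

/-- Left shift of a vector in `ℕ^b`: `(Ls)_i = s_{i+1}`, with a trailing zero. -/
def shiftL {b : ℕ} (s : Fin b → ℕ) : Fin b → ℕ :=
  fun i => if h : i.val + 1 < b then s ⟨i.val + 1, h⟩ else 0

/-- The set `S` of `s ∈ ℕ^b` with `∑ s = k` and `s_i ≤ r_i + s_{i+1}` (where `s_{b+1} = 0`). -/
def compBddL {b : ℕ} (r : Fin b → ℕ) (k : ℕ) : Finset (Fin b → ℕ) :=
  (Finset.Nat.antidiagonalTuple b k).filter fun s => ∀ i, s i ≤ r i + shiftL s i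

/-- `M(p,q)`: the number of `m × n` ℕ-valued matrices with row sums `p` and column sums `q`. -/
noncomputable def Mcount {m n : ℕ} (p : Fin m → ℕ) (q : Fin n → ℕ) : ℕ :=
  Set.ncard {A : Fin m → Fin n → ℕ |
    (∀ i, ∑ j, A i j = p i) ∧ (∀ j, ∑ i, A i j = q j)}

/-! ### Level counts -/

/-- The number of columns `j` in which the unit step from height `i + 1` down to `i` is made when
the column sums are lowered from `q` to `c`. -/
def levelCount {n : ℕ} (q c : Fin n → ℕ) (i : ℕ) : ℕ :=
  (Finset.univ.filter fun j => c j ≤ i ∧ i < q j).card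

/-- Both sides count the columns with `c j ≤ i + 1 ≤ q j`. -/
lemma countAt_add_levelCount {n : ℕ} {q c : Fin n → ℕ} (h : c ≤ q) (i : ℕ) :
    countAt c (i + 1) + levelCount q c i = countAt q (i + 1) + levelCount q c (i + 1) := by
  unfold countAt levelCount
  rw [← Finset.card_union_of_disjoint, ← Finset.card_union_of_disjoint]
  · refine congrArg Finset.card (Finset.ext fun j => ?_)
    have : c j ≤ q j := h j
    simp only [Finset.mem_union, Finset.mem_filter, Finset.mem_univ, true_and]
    omega
  · rw [Finset.disjoint_filter]
    intros
    omega
  · rw [Finset.disjoint_filter]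
    intros
    omega

lemma levelCount_eq_zero {n b : ℕ} {q : Fin n → ℕ} (hq : ∀ j, q j ≤ b) (c : Fin n → ℕ) :
    levelCount q c b = 0 := by
  unfold levelCount
  rw [Finset.card_eq_zero, Finset.filter_eq_empty_iff]
  intro j _
  have := hq j
  omega

lemma shiftL_levelCount {n b : ℕ} {q : Fin n → ℕ} (hq : ∀ j, q j ≤ b) (c : Fin n → ℕ)
    (i : Fin b) : shiftL (fun i : Fin b => levelCount q c i) i = levelCount q c (i + 1) := by
  unfold shiftL
  split_ifs with h
  · rfl
  · have : i.val + 1 = b := by omega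
    rw [this, levelCount_eq_zero hq]

lemma sum_levelCount {n b : ℕ} {q : Fin n → ℕ} (hq : ∀ j, q j ≤ b) (c : Fin n → ℕ) :
    ∑ i : Fin b, levelCount q c i = ∑ j, (q j - c j) := by
  rw [Fin.sum_univ_eq_sum_range (levelCount q c) b]
  unfold levelCount
  have := Finset.sum_card_bipartiteAbove_eq_sum_card_bipartiteBelow (s := Finset.range b)
    (t := (Finset.univ : Finset (Fin n))) (fun i j => c j ≤ i ∧ i < q j)
  unfold Finset.bipartiteAbove Finset.bipartiteBelow at this
  rw [this]
  refine Finset.sum_congr rfl fun j _ => ?_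
  rw [← Nat.card_Ico]
  refine congrArg Finset.card (Finset.ext fun i => ?_)
  have := hq j
  simp only [Finset.mem_filter, Finset.mem_range, Finset.mem_Ico]
  omega

lemma levelCount_pred {n : ℕ} (q c : Fin n → ℕ) (i : ℕ) :
    levelCount (fun j => q j - 1) (fun j => c j - 1) i = levelCount q c (i + 1) := by
  unfold levelCount
  refine congrArg Finset.card (Finset.ext fun j => ?_)
  simp only [Finset.mem_filter, Finset.mem_univ, true_and]
  omega

/-! ### Counting the vectors with given level counts -/

/-- The number of `c ≤ q` with prescribed level counts `s`. -/
lemma card_levelCount_eq {n : ℕ} (b : ℕ) (q : Fin n → ℕ) (hq : ∀ j, q j ≤ b) (s : Fin b → ℕ) :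
    ((Finset.Iic q).filter fun c => ∀ i : Fin b, levelCount q c i = s i).card =
      ∏ i, Nat.choose (countAt q (i.val + 1) + shiftL s i) (s i) := by
  induction b generalizing q with
  | zero =>
    have h0 : q = 0 := funext fun j => Nat.le_zero.1 (hq j)
    subst h0
    have : (Finset.Iic (0 : Fin n → ℕ)) = {0} := by
      ext c
      simp [funext_iff]
    simp [this]
  | succ b ih =>
    set q' : Fin n → ℕ := fun j => q j - 1 with hqdef
    have hq' : ∀ j, q' j ≤ b := fun j => by have := hq j; simp only [hqdef]; omega
    have key := ih q' hq' (Fin.tail s)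
    rw [Fin.prod_univ_succ]
    have hprod : ∏ i : Fin b, Nat.choose (countAt q (i.succ.val + 1) + shiftL s i.succ)
        (s i.succ) =
        ∏ i : Fin b, Nat.choose (countAt q' (i.val + 1) + shiftL (Fin.tail s) i)
          (Fin.tail s i) := by
      refine Finset.prod_congr rfl fun i _ => ?_
      have h1 : countAt q (i.succ.val + 1) = countAt q' (i.val + 1) := by
        unfold countAt
        refine congrArg Finset.card (Finset.ext fun j => ?_)
        simp only [Finset.mem_filter, Finset.mem_univ, true_and, hqdef, Fin.val_succ]
        omega
      have h2 : shiftL s i.succ = shiftL (Fin.tail s) i := by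
        unfold shiftL
        by_cases h : i.val + 1 < b
        · simp [h, Fin.tail]
        · simp [h]
      rw [h1, h2]
      rfl
    rw [hprod, ← key]
    set X := (Finset.Iic q).filter fun c => ∀ i : Fin (b + 1), levelCount q c i = s i with hX
    set Y := (Finset.Iic q').filter fun c => ∀ i : Fin b, levelCount q' c i = Fin.tail s i with hY
    have hmaps : ∀ c ∈ X, (fun j => c j - 1) ∈ Y := by
      intro c hc
      simp only [hX, hY, Finset.mem_filter, Finset.mem_Iic] at hc ⊢
      refine ⟨fun j => Nat.sub_le_sub_right (hc.1 j) 1, fun i => ?_⟩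
      rw [hqdef, levelCount_pred]
      exact hc.2 i.succ
    rw [Finset.card_eq_sum_card_fiberwise hmaps, mul_comm, ← smul_eq_mul, ← Finset.sum_const]
    refine Finset.sum_congr rfl fun d hd => ?_
    simp only [hY, Finset.mem_filter, Finset.mem_Iic] at hd
    obtain ⟨hdq, hds⟩ := hd
    have hdq' : ∀ j, d j ≤ q j - 1 := hdq
    have hcard : (Finset.univ.filter fun j => d j = 0 ∧ 0 < q j).card =
        countAt q ((0 : Fin (b + 1)).val + 1) + shiftL s 0 := by
      have h1 : shiftL s 0 = levelCount q' d 0 := by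
        unfold shiftL
        split_ifs with h
        · exact (hds ⟨0, by simpa using h⟩).symm
        · have hb : b = 0 := by simpa using h
          subst hb
          exact (levelCount_eq_zero hq' d).symm
      rw [h1]
      unfold countAt levelCount
      rw [← Finset.card_union_of_disjoint]
      · refine congrArg Finset.card (Finset.ext fun j => ?_)
        have := hdq' j
        simp only [Finset.mem_union, Finset.mem_filter, Finset.mem_univ, true_and, hqdef]
        -- only now, since it would otherwise rewrite under the decidability instances of the filters
        simp only [Fin.val_zero]
        omega
      · rw [Finset.disjoint_filter]
        simp only [hqdef, Fin.val_zero]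
        intros
        omega
    rw [← hcard, ← Finset.card_powersetCard]
    refine Finset.card_nbij' (fun c => Finset.univ.filter fun j => c j = 0 ∧ 0 < q j)
      (fun T j => if j ∈ T ∨ q j = 0 then 0 else d j + 1) ?_ ?_ ?_ ?_
    · intro c hc
      simp only [hX, Finset.coe_filter, Finset.mem_filter, Finset.mem_Iic, Set.mem_ofPred_eq] at hc
      obtain ⟨⟨hcq, hcs⟩, rfl⟩ := hc
      simp only [Finset.mem_coe, Finset.mem_powersetCard]
      refine ⟨fun j => ?_, ?_⟩
      · simp only [Finset.mem_filter, Finset.mem_univ, true_and]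
        omega
      · rw [← hcs 0]
        simp [levelCount]
    · intro T hT
      simp only [Finset.mem_coe, Finset.mem_powersetCard] at hT
      obtain ⟨hTs, hTc⟩ := hT
      have hT0 : ∀ j ∈ T, d j = 0 ∧ 0 < q j := fun j hj => by simpa using hTs hj
      have hpred : (fun j => (if j ∈ T ∨ q j = 0 then 0 else d j + 1) - 1) = d := by
        funext j
        have := hdq' j
        split_ifs with h
        · rcases h with h | h
          · simp [(hT0 j h).1]
          · omega
        · omega
      simp only [hX, Finset.coe_filter, Finset.mem_filter, Finset.mem_Iic, Set.mem_ofPred_eq]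
      refine ⟨⟨fun j => ?_, fun i => ?_⟩, hpred⟩
      · have := hdq' j
        dsimp only
        split_ifs with h
        · omega
        · have : q j ≠ 0 := fun h' => h (Or.inr h')
          omega
      · refine Fin.cases ?_ (fun i => ?_) i
        · rw [← hTc]
          unfold levelCount
          refine congrArg Finset.card (Finset.ext fun j => ?_)
          simp only [Finset.mem_filter, Finset.mem_univ, true_and]
          simp only [Fin.val_zero]
          constructor
          · rintro ⟨h, hj⟩
            split_ifs at h with h'
            · exact h'.resolve_right (by omega)
            · omega
          · intro h
            exact ⟨by simp [h], (hT0 j h).2⟩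
        · rw [Fin.val_succ, ← levelCount_pred]
          rw [hpred]
          exact hds i
    · intro c hc
      simp only [hX, Finset.coe_filter, Finset.mem_filter, Finset.mem_Iic, Set.mem_ofPred_eq] at hc
      obtain ⟨⟨hcq, hcs⟩, rfl⟩ := hc
      funext j
      have : c j ≤ q j := hcq j
      simp only [Finset.mem_filter, Finset.mem_univ, true_and]
      split_ifs <;> omega
    · intro T hT
      simp only [Finset.mem_coe, Finset.mem_powersetCard] at hT
      have hT0 : ∀ j ∈ T, d j = 0 ∧ 0 < q j := fun j hj => by simpa using hT.1 hj
      ext j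
      simp only [Finset.mem_filter, Finset.mem_univ, true_and]
      constructor
      · rintro ⟨h, hj⟩
        split_ifs at h with h'
        exact h'.resolve_right (by omega)
      · intro h
        exact ⟨by simp [h], (hT0 j h).2⟩

/-! ### Symmetry and first-row decomposition of the number of matrices -/

lemma Mset_finite {m n : ℕ} (p : Fin m → ℕ) (q : Fin n → ℕ) :
    {A : Fin m → Fin n → ℕ | (∀ i, ∑ j, A i j = p i) ∧ (∀ j, ∑ i, A i j = q j)}.Finite := by
  refine (Set.finite_Iic (fun (i : Fin m) (_ : Fin n) => p i)).subset ?_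
  rintro A ⟨h, -⟩ i j
  dsimp only
  rw [← h i]
  exact Finset.single_le_sum (f := A i) (fun _ _ => Nat.zero_le _) (Finset.mem_univ j)

lemma Mcount_comp_perm {m n : ℕ} (p : Fin m → ℕ) (q : Fin n → ℕ) (e : Equiv.Perm (Fin n)) :
    Mcount p (q ∘ e) = Mcount p q := by
  unfold Mcount
  refine Set.ncard_congr (fun A _ i j => A i (e.symm j)) ?_ ?_ ?_
  · rintro A ⟨h1, h2⟩
    refine ⟨fun i => ?_, fun j => ?_⟩
    · rw [← h1 i]
      exact Equiv.sum_comp e.symm (A i)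
    · simpa using h2 (e.symm j)
  · intro A B _ _ h
    funext i j
    simpa using congrFun (congrFun h i) (e j)
  · rintro A ⟨h1, h2⟩
    refine ⟨fun i j => A i (e j), ⟨fun i => ?_, fun j => h2 (e j)⟩, ?_⟩
    · rw [← h1 i]
      exact Equiv.sum_comp e (A i)
    · simp

/-- Only the positive values need to be compared: both vectors have `n` entries, so their numbers
of zeros then agree as well. -/
lemma Mcount_eq_of_countAt {m n : ℕ} (p : Fin m → ℕ) {u v : Fin n → ℕ}
    (h : ∀ i, countAt u (i + 1) = countAt v (i + 1)) : Mcount p u = Mcount p v := by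
  have htot : ∀ (N : ℕ) (x : Fin n → ℕ), (∀ j, x j ≤ N) →
      ∑ i ∈ Finset.range (N + 1), countAt x i = n := by
    intro N x hx
    have := Finset.card_eq_sum_card_fiberwise (f := x) (s := Finset.univ)
      (t := Finset.range (N + 1))
      (fun j _ => by simpa using Nat.lt_succ_of_le (hx j))
    rw [Finset.card_univ, Fintype.card_fin] at this
    exact this.symm
  have hu := htot (Finset.univ.sup u + Finset.univ.sup v) u
    fun j => (Finset.le_sup (Finset.mem_univ j)).trans (Nat.le_add_right _ _)
  have hv := htot (Finset.univ.sup u + Finset.univ.sup v) v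
    fun j => (Finset.le_sup (Finset.mem_univ j)).trans (Nat.le_add_left _ _)
  rw [Finset.sum_range_succ'] at hu hv
  simp only [h] at hu
  have hall : ∀ i, countAt u i = countAt v i := by
    rintro (_ | i)
    · omega
    · exact h i
  have hfib : ∀ i, Nonempty ({j // u j = i} ≃ {j // v j = i}) := fun i =>
    ⟨Fintype.equivOfCardEq (by simpa only [countAt, Fintype.card_subtype] using hall i)⟩
  let e := fun i => (hfib i).some
  have he : v ∘ Equiv.ofFiberEquiv e = u := funext fun j => Equiv.ofFiberEquiv_map e j
  rw [← he, Mcount_comp_perm]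

/-- Removing the first row; `c` is the vector of the remaining column sums. -/
lemma Mcount_succ {m n : ℕ} (p : Fin (m + 1) → ℕ) (q : Fin n → ℕ) :
    Mcount p q = ∑ c ∈ (Finset.Iic q).filter (fun c => ∑ j, (q j - c j) = p 0),
      Mcount (p ∘ Fin.succ) c := by
  classical
  have hM : ∀ {k : ℕ} (p : Fin k → ℕ) (q : Fin n → ℕ),
      Mcount p q = (Mset_finite p q).toFinset.card :=
    fun p q => Set.ncard_eq_toFinset_card _ _
  simp only [hM]
  rw [Finset.card_eq_sum_card_fiberwise (f := fun A j => ∑ i : Fin m, A i.succ j)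
    (t := (Finset.Iic q).filter (fun c => ∑ j, (q j - c j) = p 0))]
  · refine Finset.sum_congr rfl fun c hc => ?_
    simp only [Finset.mem_filter, Finset.mem_Iic] at hc
    obtain ⟨hcq, hc0⟩ := hc
    refine Finset.card_nbij' (fun A => Fin.tail A)
      (fun B => Fin.cons (fun j => q j - c j) B) ?_ ?_ ?_ ?_
    · intro A hA
      simp only [Finset.coe_filter, Set.Finite.mem_toFinset, Set.mem_ofPred_eq,
        Set.Finite.coe_toFinset] at hA ⊢
      exact ⟨fun i => hA.1.1 i.succ, fun j => congrFun hA.2 j⟩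
    · intro B hB
      simp only [Finset.coe_filter, Set.Finite.mem_toFinset, Set.mem_ofPred_eq,
        Set.Finite.coe_toFinset] at hB ⊢
      refine ⟨⟨fun i => ?_, fun j => ?_⟩, ?_⟩
      · refine Fin.cases ?_ (fun i => ?_) i
        · simpa using hc0
        · simpa using hB.1 i
      · rw [Fin.sum_univ_succ]
        simp only [Fin.cons_zero, Fin.cons_succ, hB.2]
        exact Nat.sub_add_cancel (hcq j)
      · funext j
        simpa using hB.2 j
    · intro A hA
      simp only [Finset.coe_filter, Set.Finite.mem_toFinset, Set.mem_ofPred_eq] at hA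
      have : (fun j => q j - c j) = A 0 := by
        funext j
        have h1 := hA.1.2 j
        have h2 := congrFun hA.2 j
        rw [Fin.sum_univ_succ] at h1
        omega
      rw [this]
      exact Fin.cons_self_tail A
    · intro B _
      exact Fin.tail_cons (α := fun _ => Fin n → ℕ) _ B
  · intro A hA
    simp only [Set.Finite.coe_toFinset, Set.mem_ofPred_eq] at hA
    simp only [Finset.coe_filter, Finset.mem_Iic, Set.mem_ofPred_eq]
    have h : ∀ j, A 0 j + ∑ i : Fin m, A i.succ j = q j := fun j => by
      rw [← hA.2 j, Fin.sum_univ_succ]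
    refine ⟨fun j => ?_, ?_⟩
    · rw [← h j]
      exact Nat.le_add_left _ _
    · rw [← hA.1 0]
      refine Finset.sum_congr rfl fun j _ => ?_
      rw [← h j, Nat.add_sub_cancel]

/-! ### The recurrence -/

theorem stmt1 {m n : ℕ} (p : Fin (m + 1) → ℕ) (q : Fin n → ℕ)
    (hsum : ∑ i, p i = ∑ j, q j)
    (b : ℕ) (hb : b = Finset.univ.sup q)
    (r : Fin b → ℕ) (hr : ∀ i : Fin b, r i = countAt q (i.val + 1))
    (w : (Fin b → ℕ) → (Fin n → ℕ))
    (hw : ∀ s ∈ compBddL r (p 0),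
      (∀ i : Fin b, countAt (w s) (i.val + 1) = r i + shiftL s i - s i) ∧
      (∀ i : ℕ, b < i → countAt (w s) i = 0)) :
    Mcount p q =
      ∑ s ∈ compBddL r (p 0),
        (∏ i, Nat.choose (r i + shiftL s i) (s i)) * Mcount (p ∘ Fin.succ) (w s) := by
  have hq : ∀ j, q j ≤ b := fun j => hb ▸ Finset.le_sup (Finset.mem_univ j)
  rw [Mcount_succ]
  have hmaps : ∀ c ∈ (Finset.Iic q).filter (fun c => ∑ j, (q j - c j) = p 0),
      (fun i : Fin b => levelCount q c i) ∈ compBddL r (p 0) := by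
    intro c hc
    simp only [Finset.mem_filter, Finset.mem_Iic] at hc
    simp only [compBddL, Finset.mem_filter, Finset.Nat.mem_antidiagonalTuple]
    refine ⟨by rw [sum_levelCount hq, hc.2], fun i => ?_⟩
    rw [shiftL_levelCount hq, hr, ← countAt_add_levelCount hc.1]
    exact Nat.le_add_left _ _
  rw [← Finset.sum_fiberwise_of_maps_to hmaps]
  refine Finset.sum_congr rfl fun s hs => ?_
  have hfib : ((Finset.Iic q).filter (fun c => ∑ j, (q j - c j) = p 0)).filter
      (fun c => (fun i : Fin b => levelCount q c i) = s) =
      (Finset.Iic q).filter fun c => ∀ i : Fin b, levelCount q c i = s i := by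
    ext c
    simp only [Finset.mem_filter, funext_iff]
    refine ⟨fun h => ⟨h.1.1, h.2⟩, fun h => ⟨⟨h.1, ?_⟩, h.2⟩⟩
    simp only [compBddL, Finset.mem_filter, Finset.Nat.mem_antidiagonalTuple] at hs
    rw [← sum_levelCount hq, ← hs.1]
    exact Finset.sum_congr rfl fun i _ => h.2 i
  rw [hfib]
  simp only [hr]
  rw [← card_levelCount_eq b q hq s, ← smul_eq_mul, ← Finset.sum_const]
  refine Finset.sum_congr rfl fun c hc => Mcount_eq_of_countAt _ fun i => ?_
  simp only [Finset.mem_filter, Finset.mem_Iic] at hc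
  have hbal := countAt_add_levelCount hc.1 i
  obtain ⟨hw1, hw2⟩ := hw s hs
  by_cases hi : i < b
  · have h1 := hw1 ⟨i, hi⟩
    obtain rfl : (fun i : Fin b => levelCount q c i) = s := funext hc.2
    rw [shiftL_levelCount hq, hr] at h1
    dsimp only at h1
    omega
  · rw [hw2 (i + 1) (by omega)]
    unfold countAt
    rw [Finset.card_eq_zero, Finset.filter_eq_empty_iff]
    intro j _
    have h1 : c j ≤ q j := hc.1 j
    have h2 := hq j
    omega
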